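/- Let ω ⊂ ℝ² be a bounded open set and let r : ω → ℝ be bounded and Lipschitz continuous. Fix x_h ∈ ω. Then: (i) the principal value P := lim_{δ→0⁺} ∫_{ω \ B_δ(x_h)} r(y_h)(x_h − y_h)/|x_h − y_h|³ dy_h exists in ℝ², where B_δ(x_h) is the open disc of radius δ centered at x_h; and (ii) for every x₃ ∈ (0,1), lim_{ε→0⁺} ∫_{ω×(0,1)} r(y_h)(x_h − y_h)/(|x_h − y_h|² + ε²(x₃ − y₃)²)^{3/2} dy = P. -/

import Mathlib

open MeasureTheory Set Filter

/-!
Near `x` split the density as `r = (r - r x) + r x`, the constant part being cut off to a ball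
around `x` contained in `ω`. Every kernel involved, truncated or softened, is odd and of size at
most `‖v‖ ^ (-d)`. By oddness the constant part does not contribute, and by Hölder continuity the
remaining integrand is dominated by a multiple of the integrable function `‖x - y‖ ^ (α - d)`.
Dominated convergence gives the limits `δ → 0` and `b → 0` of the planar integrals, with the same
value. The slab integral is the average over `t ∈ (0, 1)` of planar integrals softened at scale
`b = ε (x₃ - t)`. Fubini applies because the softened kernel is at most
`‖v‖ ^ (1 / 2 - d) * |b| ^ (-1 / 2)`, which is jointly integrable.
-/

section

open Metric Module Topology
open scoped NNReal

theorem rpow_mul_rpow_le_sq_add_sq_rpow {a b p q : ℝ} (ha : 0 ≤ a) (hb : 0 ≤ b)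
    (hp : 0 ≤ p) (hq : 0 ≤ q) : a ^ p * b ^ q ≤ (a ^ 2 + b ^ 2) ^ ((p + q) / 2) := by
  have ha' : a ≤ √(a ^ 2 + b ^ 2) := Real.le_sqrt_of_sq_le (by linarith [sq_nonneg b])
  have hb' : b ≤ √(a ^ 2 + b ^ 2) := Real.le_sqrt_of_sq_le (by linarith [sq_nonneg a])
  calc a ^ p * b ^ q ≤ √(a ^ 2 + b ^ 2) ^ p * √(a ^ 2 + b ^ 2) ^ q := by gcongr
    _ = √(a ^ 2 + b ^ 2) ^ (p + q) := (Real.rpow_add_of_nonneg (Real.sqrt_nonneg _) hp hq).symm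
    _ = (a ^ 2 + b ^ 2) ^ ((p + q) / 2) := by
      rw [Real.sqrt_eq_rpow, ← Real.rpow_mul (by positivity), one_div_mul_eq_div]

theorem tendsto_integral_comp_mul {X G : Type*} [MeasurableSpace X] {ν : Measure X}
    [IsFiniteMeasure ν] [NormedAddCommGroup G] [NormedSpace ℝ G] [CompleteSpace G]
    {f : ℝ → G} {a : G} (hf : Tendsto f (𝓝[≠] 0) (𝓝 a)) {h : X → ℝ} {ρ : ℝ}
    (hρ : ∀ᵐ t ∂ν, |h t| ≤ ρ) (hne : ∀ᵐ t ∂ν, h t ≠ 0)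
    (hmeas : ∀ ε : ℝ, ε ≠ 0 → AEStronglyMeasurable (fun t ↦ f (ε * h t)) ν) :
    Tendsto (fun ε : ℝ ↦ ∫ t, f (ε * h t) ∂ν) (𝓝[≠] 0) (𝓝 (ν.real univ • a)) := by
  obtain ⟨η, hη, hfη⟩ : ∃ η > 0, ∀ b : ℝ, b ≠ 0 → |b| < η → ‖f b‖ < ‖a‖ + 1 := by
    have hnear := hf.norm.eventually_lt_const (lt_add_one ‖a‖)
    obtain ⟨η, hη, hnear⟩ := Metric.eventually_nhds_iff.1 (eventually_nhdsWithin_iff.1 hnear)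
    exact ⟨η, hη, fun b hb0 hb ↦ hnear (by simpa using hb) hb0⟩
  have hsmall : ∀ᶠ ε : ℝ in 𝓝[≠] 0, |ε| * ρ < η :=
    ((Continuous.tendsto' (by fun_prop) 0 0 (by simp)).mono_left
      nhdsWithin_le_nhds).eventually_lt_const hη
  rw [← integral_const]
  refine tendsto_integral_filter_of_dominated_convergence (fun _ ↦ ‖a‖ + 1)
    (eventually_nhdsWithin_of_forall hmeas) ?_ (integrable_const _) ?_
  · filter_upwards [hsmall, self_mem_nhdsWithin] with ε hε hε0
    filter_upwards [hne, hρ] with t ht htρ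
    refine (hfη _ (mul_ne_zero hε0 ht) ?_).le
    calc |ε * h t| = |ε| * |h t| := abs_mul _ _
      _ ≤ |ε| * ρ := by gcongr
      _ < η := hε
  · filter_upwards [hne] with t ht
    refine hf.comp (tendsto_nhdsWithin_iff.2 ⟨?_, ?_⟩)
    · exact (Continuous.tendsto' (by fun_prop) 0 0 (zero_mul (h t))).mono_left nhdsWithin_le_nhds
    · filter_upwards [self_mem_nhdsWithin] with ε hε using mul_ne_zero hε ht

section Kernel

variable {E : Type*} [NormedAddCommGroup E] [NormedSpace ℝ E]

/-- The kernel `v / (|v|² + b²)^((d + 1) / 2)` in dimension `d`, i.e. `v / |v|^(d + 1)` softened at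
length scale `b`; for `d = 2` this is the horizontal gravitational attraction of a point mass at
vertical distance `b`. The unsoftened singular kernel is `b = 0`, with value `0` at the origin. -/
noncomputable def softenedKernel (b : ℝ) (v : E) : E :=
  ((‖v‖ ^ 2 + b ^ 2) ^ ((finrank ℝ E + 1) / 2 : ℝ))⁻¹ • v

theorem smul_softenedKernel (a b : ℝ) (v : E) :
    a • softenedKernel b v = (a / (‖v‖ ^ 2 + b ^ 2) ^ ((finrank ℝ E + 1) / 2 : ℝ)) • v := by
  rw [softenedKernel, smul_smul, ← div_eq_mul_inv a]

theorem smul_softenedKernel_zero (a : ℝ) (v : E) :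
    a • softenedKernel 0 v = (a / ‖v‖ ^ (finrank ℝ E + 1)) • v := by
  have hpow : (‖v‖ ^ 2 + 0 ^ 2) ^ ((finrank ℝ E + 1) / 2 : ℝ) = ‖v‖ ^ (finrank ℝ E + 1) := by
    rw [← Real.rpow_natCast ‖v‖ (finrank ℝ E + 1), zero_pow two_ne_zero, add_zero,
      ← Real.rpow_natCast_mul (norm_nonneg v)]
    push_cast
    ring_nf
  rw [smul_softenedKernel, hpow]

theorem odd_softenedKernel (b : ℝ) : Function.Odd (softenedKernel (E := E) b) := fun v ↦ by
  rw [softenedKernel, softenedKernel, norm_neg, smul_neg]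

@[fun_prop]
theorem measurable_softenedKernel [MeasurableSpace E] [BorelSpace E] [SecondCountableTopology E]
    {X : Type*} [MeasurableSpace X] {b : X → ℝ} {v : X → E} (hb : Measurable b)
    (hv : Measurable v) : Measurable fun t ↦ softenedKernel (b t) (v t) := by
  unfold softenedKernel
  fun_prop

theorem norm_softenedKernel_mul_rpow_le {s : ℝ} (hs₀ : 0 ≤ s) (hs : s ≤ finrank ℝ E + 1)
    (b : ℝ) (v : E) : ‖softenedKernel b v‖ * |b| ^ s ≤ ‖v‖ ^ (s - finrank ℝ E) := by
  rcases eq_or_ne v 0 with rfl | hv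
  · rw [softenedKernel, smul_zero, norm_zero, zero_mul]
    positivity
  set d : ℝ := (finrank ℝ E : ℝ)
  have hv' : 0 < ‖v‖ := norm_pos_iff.2 hv
  have hinterp : ‖v‖ ^ (d + 1 - s) * |b| ^ s ≤ (‖v‖ ^ 2 + b ^ 2) ^ ((d + 1) / 2) := by
    simpa using rpow_mul_rpow_le_sq_add_sq_rpow hv'.le (abs_nonneg b) (sub_nonneg.2 hs) hs₀
  have hsplit : ‖v‖ = ‖v‖ ^ (s - d) * ‖v‖ ^ (d + 1 - s) := by
    rw [← Real.rpow_add hv', sub_add_sub_cancel', add_sub_cancel_left, Real.rpow_one]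
  rw [softenedKernel, norm_smul, Real.norm_of_nonneg (by positivity), mul_assoc, inv_mul_le_iff₀
    (by positivity)]
  calc ‖v‖ * |b| ^ s = ‖v‖ ^ (s - d) * (‖v‖ ^ (d + 1 - s) * |b| ^ s) := by
        rw [← mul_assoc, ← hsplit]
    _ ≤ ‖v‖ ^ (s - d) * (‖v‖ ^ 2 + b ^ 2) ^ ((d + 1) / 2) := by gcongr
    _ = _ := mul_comm _ _

theorem norm_softenedKernel_le (b : ℝ) (v : E) :
    ‖softenedKernel b v‖ ≤ ‖v‖ ^ (-finrank ℝ E : ℝ) := by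
  simpa using norm_softenedKernel_mul_rpow_le le_rfl (by positivity) b v

theorem norm_softenedKernel_le_rpow_mul_rpow {s : ℝ} (hs₀ : 0 ≤ s) (hs : s ≤ finrank ℝ E + 1)
    {b : ℝ} (hb : b ≠ 0) (v : E) :
    ‖softenedKernel b v‖ ≤ ‖v‖ ^ (s - finrank ℝ E) * |b| ^ (-s) := by
  rw [Real.rpow_neg (abs_nonneg b), ← div_eq_mul_inv, le_div_iff₀ (by positivity)]
  exact norm_softenedKernel_mul_rpow_le hs₀ hs b v

theorem tendsto_softenedKernel_zero (v : E) :
    Tendsto (fun b ↦ softenedKernel b v) (𝓝 0) (𝓝 (softenedKernel 0 v)) := by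
  rcases eq_or_ne v 0 with rfl | hv
  · simp only [softenedKernel, smul_zero, tendsto_const_nhds]
  have hcont : Continuous fun b ↦ softenedKernel b v := by
    refine Continuous.smul (Continuous.inv₀ (Continuous.rpow_const (by fun_prop) fun b ↦ ?_)
      fun b ↦ ?_) continuous_const
    · exact Or.inr (by positivity)
    · positivity
  exact hcont.tendsto 0

end Kernel

section Truncation

variable {E G : Type*} [NormedAddCommGroup E] [NormedAddCommGroup G]

theorem odd_indicator_compl_ball {k : E → G} (hk : Function.Odd k) (δ : ℝ) :
    Function.Odd ((ball (0 : E) δ)ᶜ.indicator k) := fun v ↦ by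
  have hmem : -v ∈ (ball (0 : E) δ)ᶜ ↔ v ∈ (ball 0 δ)ᶜ := by simp
  by_cases hv : v ∈ (ball (0 : E) δ)ᶜ
  · rw [indicator_of_mem hv, indicator_of_mem (hmem.2 hv), hk]
  · rw [indicator_of_notMem hv, indicator_of_notMem (mt hmem.1 hv), neg_zero]

theorem tendsto_indicator_compl_ball {k : E → G} (hk : k 0 = 0) (v : E) :
    Tendsto (fun δ ↦ (ball (0 : E) δ)ᶜ.indicator k v) (𝓝[>] 0) (𝓝 (k v)) := by
  rcases eq_or_ne v 0 with rfl | hv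
  · simp [indicator, hk]
  · refine tendsto_const_nhds.congr' ?_
    filter_upwards [nhdsWithin_le_nhds (Iio_mem_nhds (norm_pos_iff.2 hv))] with δ hδ
    rw [indicator_of_mem]
    simpa using le_of_lt hδ

theorem setIntegral_smul_indicator_compl_ball [NormedSpace ℝ G] [MeasurableSpace E]
    [OpensMeasurableSpace E] (μ : Measure E) (ω : Set E) (r : E → ℝ) (k : E → G)
    (x : E) (δ : ℝ) :
    ∫ y in ω, r y • (ball 0 δ)ᶜ.indicator k (x - y) ∂μ =
      ∫ y in ω \ ball x δ, r y • k (x - y) ∂μ := by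
  have hind (y : E) : r y • (ball 0 δ)ᶜ.indicator k (x - y) =
      (ball x δ)ᶜ.indicator (fun y ↦ r y • k (x - y)) y := by
    have hmem : x - y ∈ (ball (0 : E) δ)ᶜ ↔ y ∈ (ball x δ)ᶜ := by
      simp [dist_eq_norm, norm_sub_rev]
    by_cases hy : y ∈ (ball x δ)ᶜ
    · rw [indicator_of_mem hy, indicator_of_mem (hmem.2 hy)]
    · rw [indicator_of_notMem hy, indicator_of_notMem (mt hmem.1 hy), smul_zero]
  simp only [hind]
  rw [setIntegral_indicator measurableSet_ball.compl, ← sdiff_eq]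

end Truncation

section Recentering

variable {E : Type*} [NormedAddCommGroup E]

/-- The density `r` with its value at `x` subtracted on `ball x R`. Against an odd kernel centred
at `x` it has the same integral as `r`, but it vanishes at `x`. -/
noncomputable def recenterOnBall (r : E → ℝ) (x : E) (R : ℝ) (y : E) : ℝ :=
  r y - (ball x R).indicator (fun _ ↦ r x) y

theorem abs_recenterOnBall_le {ω : Set E} {r : E → ℝ} {x : E} {C : ℝ≥0} {α R : ℝ} (hα : 0 ≤ α)
    (hr : ∀ y ∈ ω, |r y - r x| ≤ C * ‖x - y‖ ^ α) (hR : 0 < R) {y : E} (hy : y ∈ ω) :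
    |recenterOnBall r x R y| ≤ (C + |r x| / R ^ α) * ‖x - y‖ ^ α := by
  rw [add_mul]
  by_cases hyR : y ∈ ball x R
  · rw [recenterOnBall, indicator_of_mem hyR]
    exact (hr y hy).trans (le_add_of_nonneg_right (by positivity))
  · have hRy : R ≤ ‖x - y‖ := by simpa [dist_eq_norm, norm_sub_rev] using hyR
    rw [recenterOnBall, indicator_of_notMem hyR, sub_zero]
    calc |r y| ≤ |r y - r x| + |r x| := by simpa using abs_add_le (r y - r x) (r x)
      _ = |r y - r x| + |r x| / R ^ α * R ^ α := by field_simp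
      _ ≤ C * ‖x - y‖ ^ α + |r x| / R ^ α * ‖x - y‖ ^ α := by gcongr; exact hr y hy

theorem exists_forall_abs_le_of_abs_sub_le_rpow {ω : Set E}
    (hω : Bornology.IsBounded ω) {r : E → ℝ} {x : E} {C : ℝ≥0} {α : ℝ} (hα : 0 ≤ α)
    (hr : ∀ y ∈ ω, |r y - r x| ≤ C * ‖x - y‖ ^ α) : ∃ M, ∀ y ∈ ω, |r y| ≤ M := by
  obtain ⟨ρ, hρ⟩ := hω.subset_closedBall x
  refine ⟨C * ρ ^ α + |r x|, fun y hy ↦ ?_⟩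
  have hyρ : ‖x - y‖ ≤ ρ := by simpa [dist_eq_norm, norm_sub_rev] using hρ hy
  calc |r y| ≤ |r y - r x| + |r x| := by simpa using abs_add_le (r y - r x) (r x)
    _ ≤ C * ‖x - y‖ ^ α + |r x| := by gcongr; exact hr y hy
    _ ≤ C * ρ ^ α + |r x| := by gcongr

end Recentering

section Haar

variable {E : Type*} [NormedAddCommGroup E] [NormedSpace ℝ E] [FiniteDimensional ℝ E]
  [MeasurableSpace E] [BorelSpace E] {μ : Measure E} [μ.IsAddHaarMeasure]
  {G : Type*} [NormedAddCommGroup G]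

theorem integrableOn_comp_sub_left {f : E → G} (hf : LocallyIntegrable f μ) {s : Set E}
    (hs : Bornology.IsBounded s) (x : E) : IntegrableOn (fun y ↦ f (x - y)) s μ := by
  obtain ⟨ρ, hρ⟩ := hs.subset_closedBall x
  refine IntegrableOn.mono_set ?_ hρ
  have hpre : (fun y ↦ x - y) ⁻¹' closedBall 0 ρ = closedBall x ρ := by
    ext y; simp [dist_eq_norm, norm_sub_rev]
  rw [← hpre]
  exact ((Measure.measurePreserving_sub_left μ x).integrableOn_comp_preimage
    (MeasurableEquiv.subLeft x).measurableEmbedding).2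
      (hf.integrableOn_isCompact (isCompact_closedBall 0 ρ))

theorem locallyIntegrable_norm_rpow [Nontrivial E] {a : ℝ} (ha : -finrank ℝ E < a) :
    LocallyIntegrable (fun v : E ↦ ‖v‖ ^ a) μ := by
  refine locallyIntegrable_of_norm_le_rpow (C := 1) (α := -a) finrank_pos (by linarith)
    (ae_of_all _ fun v ↦ ?_) (measurable_norm.pow_const a).aestronglyMeasurable
  rw [neg_neg, one_mul, Real.norm_of_nonneg (by positivity)]

theorem locallyIntegrable_indicator_compl_ball {k : E → G} (hk : AEStronglyMeasurable k μ)
    {A a : ℝ} (ha : a ≤ 0) (hbound : ∀ v, ‖k v‖ ≤ A * ‖v‖ ^ a) {δ : ℝ} (hδ : 0 < δ) :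
    LocallyIntegrable ((ball 0 δ)ᶜ.indicator k) μ := by
  refine (locallyIntegrable_const (|A| * δ ^ a)).mono
    (hk.indicator measurableSet_ball.compl) (ae_of_all _ fun v ↦ ?_)
  rw [Real.norm_of_nonneg (by positivity)]
  by_cases hv : v ∈ (ball (0 : E) δ)ᶜ
  · have hδv : δ ≤ ‖v‖ := by simpa using hv
    rw [indicator_of_mem hv]
    calc ‖k v‖ ≤ A * ‖v‖ ^ a := hbound v
      _ ≤ |A| * δ ^ a := mul_le_mul (le_abs_self A) (Real.rpow_le_rpow_of_nonpos hδ hδv ha)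
        (by positivity) (abs_nonneg A)
  · rw [indicator_of_notMem hv, norm_zero]
    positivity

theorem locallyIntegrable_softenedKernel {b : ℝ} (hb : b ≠ 0) :
    LocallyIntegrable (softenedKernel (E := E) b) μ := by
  have hbound (v : E) : ‖softenedKernel b v‖ ≤ |b| ^ (-finrank ℝ E : ℝ) := by
    simpa only [sub_self, Real.rpow_zero, one_mul] using
      norm_softenedKernel_le_rpow_mul_rpow (Nat.cast_nonneg _) (lt_add_one _).le hb v
  exact (locallyIntegrable_const (|b| ^ (-finrank ℝ E : ℝ))).mono
    (measurable_softenedKernel measurable_const measurable_id).aestronglyMeasurable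
    (ae_of_all _ fun v ↦ (hbound v).trans (le_abs_self _))

variable [NormedSpace ℝ G]

theorem setIntegral_ball_comp_sub_eq_zero_of_odd {k : E → G} (hk : Function.Odd k) (x : E)
    (R : ℝ) : ∫ y in ball x R, k (x - y) ∂μ = 0 := by
  set f : E → G := (ball x R).indicator fun y ↦ k (x - y) with hf
  have hodd (y : E) : f (x + x - y) = -f y := by
    have hsub : x - (x + x - y) = -(x - y) := by abel
    have hmem : x + x - y ∈ ball x R ↔ y ∈ ball x R := by
      rw [mem_ball', mem_ball', dist_eq_norm, dist_eq_norm, hsub, norm_neg]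
    by_cases hy : y ∈ ball x R
    · rw [hf, indicator_of_mem hy, indicator_of_mem (hmem.2 hy), hsub, hk]
    · rw [hf, indicator_of_notMem hy, indicator_of_notMem (mt hmem.1 hy), neg_zero]
  have hneg : ∫ y, f y ∂μ = -∫ y, f y ∂μ := calc
    ∫ y, f y ∂μ = ∫ y, f (x + x - y) ∂μ := (integral_sub_left_eq_self f μ (x + x)).symm
    _ = -∫ y, f y ∂μ := by simp only [hodd, integral_neg]
  have := IsAddTorsionFree.of_isTorsionFree ℝ G
  rw [← integral_indicator measurableSet_ball]
  exact self_eq_neg.1 hneg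

variable {ω : Set E} {r : E → ℝ} {x : E} {C : ℝ≥0} {α R : ℝ}

theorem setIntegral_smul_eq_setIntegral_recenterOnBall_smul {k : E → G}
    (hball : ball x R ⊆ ω) (hk : Function.Odd k)
    (hki : IntegrableOn (fun y ↦ k (x - y)) ω μ)
    (hrk : IntegrableOn (fun y ↦ recenterOnBall r x R y • k (x - y)) ω μ) :
    ∫ y in ω, r y • k (x - y) ∂μ = ∫ y in ω, recenterOnBall r x R y • k (x - y) ∂μ := by
  have hsplit (y : E) : r y • k (x - y) = recenterOnBall r x R y • k (x - y) +
      (ball x R).indicator (fun y ↦ r x • k (x - y)) y := by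
    by_cases hy : y ∈ ball x R <;> simp [recenterOnBall, hy, sub_smul]
  have hodd : ∫ y in ω, (ball x R).indicator (fun y ↦ r x • k (x - y)) y ∂μ = 0 := by
    rw [setIntegral_indicator measurableSet_ball, inter_eq_right.2 hball, integral_smul,
      setIntegral_ball_comp_sub_eq_zero_of_odd hk, smul_zero]
  have hball_int : IntegrableOn ((ball x R).indicator fun y ↦ r x • k (x - y)) ω μ :=
    (hki.smul (r x)).indicator measurableSet_ball
  simp only [hsplit]
  rw [integral_add hrk hball_int, hodd, add_zero]

theorem tendsto_setIntegral_smul_of_odd [Nontrivial E] (hωb : Bornology.IsBounded ω)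
    (hωm : MeasurableSet ω) (hrm : AEStronglyMeasurable r (μ.restrict ω)) (hα : 0 < α)
    (hr : ∀ y ∈ ω, |r y - r x| ≤ C * ‖x - y‖ ^ α) (hR : 0 < R) (hball : ball x R ⊆ ω)
    {ι : Type*} {l : Filter ι} [l.IsCountablyGenerated] {k : ι → E → G} {k₀ : E → G} {A : ℝ}
    (hodd : ∀ᶠ i in l, Function.Odd (k i)) (hint : ∀ᶠ i in l, LocallyIntegrable (k i) μ)
    (hbound : ∀ᶠ i in l, ∀ v, ‖k i v‖ ≤ A * ‖v‖ ^ (-finrank ℝ E : ℝ))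
    (hlim : ∀ v, Tendsto (fun i ↦ k i v) l (𝓝 (k₀ v))) :
    Tendsto (fun i ↦ ∫ y in ω, r y • k i (x - y) ∂μ) l
      (𝓝 (∫ y in ω, recenterOnBall r x R y • k₀ (x - y) ∂μ)) := by
  set B : ℝ := C + |r x| / R ^ α
  have hdom : ∀ᶠ i in l, ∀ᵐ y ∂μ.restrict ω, ‖recenterOnBall r x R y • k i (x - y)‖ ≤
      B * |A| * ‖x - y‖ ^ (α - finrank ℝ E) := by
    filter_upwards [hbound] with i hi
    filter_upwards [ae_restrict_mem hωm] with y hy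
    calc ‖recenterOnBall r x R y • k i (x - y)‖
        = |recenterOnBall r x R y| * ‖k i (x - y)‖ := norm_smul _ _
      _ ≤ (B * ‖x - y‖ ^ α) * (|A| * ‖x - y‖ ^ (-finrank ℝ E : ℝ)) := by
        gcongr
        · exact abs_recenterOnBall_le hα.le hr hR hy
        · exact (hi _).trans (by gcongr; exact le_abs_self A)
      _ = B * |A| * (‖x - y‖ ^ α * ‖x - y‖ ^ (-finrank ℝ E : ℝ)) := by ring
      _ ≤ B * |A| * ‖x - y‖ ^ (α - finrank ℝ E) := by
        gcongr
        exact Real.le_rpow_add (norm_nonneg _) _ _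
  have hdom_int : IntegrableOn (fun y ↦ B * |A| * ‖x - y‖ ^ (α - finrank ℝ E)) ω μ :=
    (integrableOn_comp_sub_left
      (locallyIntegrable_norm_rpow (by linarith)) hωb x).const_mul (B * |A|)
  have hki : ∀ᶠ i in l, IntegrableOn (fun y ↦ k i (x - y)) ω μ :=
    hint.mono fun i hi ↦ integrableOn_comp_sub_left hi hωb x
  have hmeas : ∀ᶠ i in l, AEStronglyMeasurable
      (fun y ↦ recenterOnBall r x R y • k i (x - y)) (μ.restrict ω) :=
    hki.mono fun i hi ↦ (hrm.sub
      (stronglyMeasurable_const.indicator measurableSet_ball).aestronglyMeasurable).smul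
        hi.aestronglyMeasurable
  have hrecenter : ∀ᶠ i in l, ∫ y in ω, recenterOnBall r x R y • k i (x - y) ∂μ =
      ∫ y in ω, r y • k i (x - y) ∂μ := by
    filter_upwards [hodd, hki, hmeas, hdom] with i hi_odd hi_int hi_meas hi_dom
    exact (setIntegral_smul_eq_setIntegral_recenterOnBall_smul hball hi_odd hi_int
      (hdom_int.mono' hi_meas hi_dom)).symm
  refine Tendsto.congr' hrecenter ?_
  exact tendsto_integral_filter_of_dominated_convergence _ hmeas hdom hdom_int
    (ae_of_all _ fun y ↦ (hlim (x - y)).const_smul _)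

theorem tendsto_setIntegral_sdiff_ball_of_odd [Nontrivial E] (hωb : Bornology.IsBounded ω)
    (hωm : MeasurableSet ω) (hrm : AEStronglyMeasurable r (μ.restrict ω)) (hα : 0 < α)
    (hr : ∀ y ∈ ω, |r y - r x| ≤ C * ‖x - y‖ ^ α) (hR : 0 < R) (hball : ball x R ⊆ ω)
    {k : E → G} (hk : Function.Odd k) (hkm : AEStronglyMeasurable k μ) {A : ℝ}
    (hbound : ∀ v, ‖k v‖ ≤ A * ‖v‖ ^ (-finrank ℝ E : ℝ)) :
    Tendsto (fun δ ↦ ∫ y in ω \ ball x δ, r y • k (x - y) ∂μ) (𝓝[>] 0)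
      (𝓝 (∫ y in ω, recenterOnBall r x R y • k (x - y) ∂μ)) := by
  have hk₀ : k 0 = 0 := by
    simpa [finrank_pos.ne'] using hbound 0
  simp only [← setIntegral_smul_indicator_compl_ball]
  refine tendsto_setIntegral_smul_of_odd hωb hωm hrm hα hr hR hball (A := A)
    (Eventually.of_forall fun δ ↦ odd_indicator_compl_ball hk δ) ?_
    (Eventually.of_forall fun δ v ↦ (norm_indicator_le_norm_self _ _).trans (hbound v))
    (tendsto_indicator_compl_ball hk₀)
  filter_upwards [self_mem_nhdsWithin] with δ hδ
  exact locallyIntegrable_indicator_compl_ball hkm (by simp) hbound hδ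

theorem tendsto_setIntegral_smul_softenedKernel [Nontrivial E] (hωb : Bornology.IsBounded ω)
    (hωm : MeasurableSet ω) (hrm : AEStronglyMeasurable r (μ.restrict ω)) (hα : 0 < α)
    (hr : ∀ y ∈ ω, |r y - r x| ≤ C * ‖x - y‖ ^ α) (hR : 0 < R) (hball : ball x R ⊆ ω) :
    Tendsto (fun b ↦ ∫ y in ω, r y • softenedKernel b (x - y) ∂μ) (𝓝[≠] 0)
      (𝓝 (∫ y in ω, recenterOnBall r x R y • softenedKernel 0 (x - y) ∂μ)) :=
  tendsto_setIntegral_smul_of_odd hωb hωm hrm hα hr hR hball (A := 1)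
    (Eventually.of_forall odd_softenedKernel)
    (eventually_nhdsWithin_of_forall fun _ hb ↦ locallyIntegrable_softenedKernel hb)
    (Eventually.of_forall fun b v ↦ (norm_softenedKernel_le b v).trans_eq (one_mul _).symm)
    fun v ↦ (tendsto_softenedKernel_zero v).mono_left nhdsWithin_le_nhds

theorem integrable_softenedKernel_prod [Nontrivial E] {X : Type*} [MeasurableSpace X]
    {ν : Measure X} (hωb : Bornology.IsBounded ω) {h : X → ℝ} (hhm : Measurable h)
    (hh₀ : ∀ᵐ t ∂ν, h t ≠ 0) {s : ℝ} (hs₀ : 0 < s) (hs : s ≤ finrank ℝ E + 1)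
    (hhs : Integrable (fun t ↦ |h t| ^ (-s)) ν) :
    Integrable (fun z : E × X ↦ softenedKernel (h z.2) (x - z.1)) ((μ.restrict ω).prod ν) := by
  have hnorm : IntegrableOn (fun y ↦ ‖x - y‖ ^ (s - finrank ℝ E)) ω μ :=
    integrableOn_comp_sub_left (locallyIntegrable_norm_rpow (by linarith)) hωb x
  have hmeas : Measurable fun z : E × X ↦ softenedKernel (h z.2) (x - z.1) := by fun_prop
  have hz₀ : ∀ᵐ z ∂(μ.restrict ω).prod ν, h z.2 ≠ 0 := Measure.quasiMeasurePreserving_snd.ae hh₀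
  refine (hnorm.mul_prod hhs).mono' hmeas.aestronglyMeasurable (hz₀.mono fun z hz ↦ ?_)
  exact norm_softenedKernel_le_rpow_mul_rpow hs₀.le hs hz (x - z.1)

theorem tendsto_integral_prod_smul_softenedKernel [Nontrivial E] (hωb : Bornology.IsBounded ω)
    (hωm : MeasurableSet ω) (hrm : AEStronglyMeasurable r (μ.restrict ω)) (hα : 0 < α)
    (hr : ∀ y ∈ ω, |r y - r x| ≤ C * ‖x - y‖ ^ α) (hR : 0 < R) (hball : ball x R ⊆ ω)
    {X : Type*} [MeasurableSpace X] {ν : Measure X} [IsFiniteMeasure ν] {h : X → ℝ}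
    (hhm : Measurable h) {ρ : ℝ} (hhρ : ∀ᵐ t ∂ν, |h t| ≤ ρ) (hh₀ : ∀ᵐ t ∂ν, h t ≠ 0)
    {s : ℝ} (hs₀ : 0 < s) (hs : s ≤ finrank ℝ E + 1)
    (hhs : Integrable (fun t ↦ |h t| ^ (-s)) ν) :
    Tendsto (fun ε ↦ ∫ z, r z.1 • softenedKernel (ε * h z.2) (x - z.1) ∂(μ.restrict ω).prod ν)
      (𝓝[≠] 0)
      (𝓝 (ν.real univ • ∫ y in ω, recenterOnBall r x R y • softenedKernel 0 (x - y) ∂μ)) := by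
  obtain ⟨M, hM⟩ := exists_forall_abs_le_of_abs_sub_le_rpow hωb hα.le hr
  have hM' : ∀ᵐ z ∂(μ.restrict ω).prod ν, ‖r z.1‖ ≤ M :=
    Measure.quasiMeasurePreserving_fst.ae ((ae_restrict_mem hωm).mono hM)
  have hint (ε : ℝ) (hε : ε ≠ 0) : Integrable
      (fun z : E × X ↦ r z.1 • softenedKernel (ε * h z.2) (x - z.1))
      ((μ.restrict ω).prod ν) := by
    have hεh : Integrable (fun t ↦ |ε * h t| ^ (-s)) ν := by
      simpa only [abs_mul, Real.mul_rpow (abs_nonneg _) (abs_nonneg _)]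
        using hhs.const_mul (|ε| ^ (-s))
    exact (integrable_softenedKernel_prod hωb (hhm.const_mul ε)
      (hh₀.mono fun _ ↦ mul_ne_zero hε) hs₀ hs hεh).bdd_smul M hrm.comp_fst hM'
  have hfubini : ∀ᶠ ε : ℝ in 𝓝[≠] 0,
      ∫ t, ∫ y in ω, r y • softenedKernel (ε * h t) (x - y) ∂μ ∂ν =
        ∫ z, r z.1 • softenedKernel (ε * h z.2) (x - z.1) ∂(μ.restrict ω).prod ν :=
    eventually_nhdsWithin_of_forall fun ε hε ↦ (integral_prod_symm _ (hint ε hε)).symm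
  have := FiniteDimensional.complete ℝ E
  refine Tendsto.congr' hfubini (tendsto_integral_comp_mul
    (tendsto_setIntegral_smul_softenedKernel hωb hωm hrm hα hr hR hball) hhρ hh₀ fun ε hε ↦ ?_)
  exact (hint ε hε).integral_prod_right.aestronglyMeasurable

end Haar

theorem stmt_11_general {E : Type*} [NormedAddCommGroup E] [NormedSpace ℝ E]
    [FiniteDimensional ℝ E] [Nontrivial E] [MeasurableSpace E] [BorelSpace E] (μ : Measure E)
    [μ.IsAddHaarMeasure] {ω : Set E} (hωb : Bornology.IsBounded ω) (hωm : MeasurableSet ω)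
    {r : E → ℝ} (hrm : AEStronglyMeasurable r (μ.restrict ω)) {x : E} (hx : ω ∈ 𝓝 x)
    {C : ℝ≥0} {α : ℝ} (hα : 0 < α) (hr : ∀ y ∈ ω, |r y - r x| ≤ C * ‖x - y‖ ^ α) :
    ∃ P : E,
      Tendsto (fun δ : ℝ ↦
          ∫ y in ω \ ball x δ, (r y / ‖x - y‖ ^ (finrank ℝ E + 1)) • (x - y) ∂μ)
        (𝓝[>] 0) (𝓝 P) ∧
      ∀ c : ℝ,
        Tendsto (fun ε : ℝ ↦
            ∫ z in ω ×ˢ Ioo (0 : ℝ) 1,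
              (r z.1 / (‖x - z.1‖ ^ 2 + ε ^ 2 * (c - z.2) ^ 2) ^ ((finrank ℝ E + 1) / 2 : ℝ)) •
                (x - z.1) ∂μ.prod volume)
          (𝓝[>] 0) (𝓝 P) := by
  obtain ⟨R, hR, hball⟩ := Metric.mem_nhds_iff.1 hx
  refine ⟨∫ y in ω, recenterOnBall r x R y • softenedKernel 0 (x - y) ∂μ, ?_, fun c ↦ ?_⟩
  · simp only [← smul_softenedKernel_zero]
    exact tendsto_setIntegral_sdiff_ball_of_odd hωb hωm hrm hα hr hR hball (odd_softenedKernel 0)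
      (measurable_softenedKernel measurable_const measurable_id).aestronglyMeasurable
      (A := 1) fun v ↦ (norm_softenedKernel_le 0 v).trans_eq (one_mul _).symm
  · have hne : ∀ᵐ t ∂volume.restrict (Ioo (0 : ℝ) 1), c - t ≠ 0 :=
      ae_restrict_of_ae ((Measure.ae_ne volume c).mono fun t ht ↦ sub_ne_zero.2 ht.symm)
    have hle : ∀ᵐ t ∂volume.restrict (Ioo (0 : ℝ) 1), |c - t| ≤ |c| + 1 := by
      filter_upwards [ae_restrict_mem measurableSet_Ioo] with t ht
      exact (abs_sub c t).trans (by rw [abs_of_pos ht.1]; linarith [ht.2])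
    have hint : IntegrableOn (fun t : ℝ ↦ |c - t| ^ (-(1 / 2) : ℝ)) (Ioo 0 1) :=
      integrableOn_comp_sub_left (locallyIntegrable_norm_rpow (by norm_num)) (isBounded_Ioo 0 1) c
    have hlim := tendsto_integral_prod_smul_softenedKernel hωb hωm hrm hα hr hR hball
      (measurable_const_sub c) hle hne one_half_pos (by linarith) hint
    simp only [← mul_pow, ← smul_softenedKernel, ← Measure.prod_restrict]
    simpa using hlim.mono_left (nhdsGT_le_nhdsNE 0)

end

/-- Convergence of the horizontal component of the rescaled self-gravitation force to
the principal-value singular integral: (i) the principal value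
`P = lim_{δ→0⁺} ∫_{ω \ B_δ(x_h)} r(y_h)(x_h − y_h)/|x_h − y_h|³ dy_h` exists, and
(ii) for every `x₃ ∈ (0,1)`,
`∫_{ω×(0,1)} r(y_h)(x_h − y_h)/(|x_h − y_h|² + ε²(x₃ − y₃)²)^{3/2} dy → P` as `ε → 0⁺`. -/
theorem stmt_11 (ω : Set (EuclideanSpace ℝ (Fin 2)))
    (hωb : Bornology.IsBounded ω) (hωo : IsOpen ω)
    (r : EuclideanSpace ℝ (Fin 2) → ℝ) (L : NNReal) (hrl : LipschitzWith L r)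
    (M : ℝ) (hrb : ∀ y ∈ ω, |r y| ≤ M)
    (x_h : EuclideanSpace ℝ (Fin 2)) (hx : x_h ∈ ω) :
    ∃ P : EuclideanSpace ℝ (Fin 2),
      Tendsto (fun δ : ℝ =>
          ∫ y in ω \ Metric.ball x_h δ, (r y / ‖x_h - y‖ ^ 3) • (x_h - y))
        (nhdsWithin 0 (Ioi 0)) (nhds P) ∧
      ∀ x₃ ∈ Ioo (0:ℝ) 1,
        Tendsto (fun ε : ℝ =>
            ∫ y in ω ×ˢ Ioo (0:ℝ) 1,
              (r y.1 / (‖x_h - y.1‖ ^ 2 + ε ^ 2 * (x₃ - y.2) ^ 2) ^ (3 / 2 : ℝ)) •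
                (x_h - y.1))
          (nhdsWithin 0 (Ioi 0)) (nhds P) := by
  obtain ⟨P, hpv, hlim⟩ := stmt_11_general volume hωb hωo.measurableSet
    hrl.continuous.aestronglyMeasurable (hωo.mem_nhds hx) one_pos (C := L)
    fun y _ ↦ by simpa [← Real.dist_eq, ← dist_eq_norm, dist_comm x_h] using hrl.dist_le_mul y x_h
  exact ⟨P, by simpa using hpv, fun c _ ↦ by
    simpa [show (2 + 1 : ℝ) = 3 by norm_num, ← Measure.volume_eq_prod] using hlim c⟩
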